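/- Let K ≥ 2, let p : Fin K → ℝ satisfy p_k ≥ 0 for all k and Σ_{k=1}^K p_k = 1, let q = max(1/2, max_{1≤k≤K} p_k), and assume q < 1. Let γ be a real number with γ ≥ 2q, and define a : Fin K → ℝ by a_k = 2(1−q)/γ if p_k = q and a_k = 2q/γ otherwise. Then S_w = Σ_{k=1}^K a_k p_k > 0 and the (K−1)×(K−1) matrix γ·S(a) − S_full is positive semidefinite. -/

import Mathlib

open Finset

/-- The index embedding from the first `K - 1` classes into all `K` classes. -/
def classEmb (K : ℕ) : Fin (K - 1) → Fin K := Fin.castLE (Nat.sub_le K 1)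

/-- The subsampling information matrix `S(a)` with weights `w k = a k * p k`:
entries `δ_{ij} w_i - w_i w_j / S_w`. -/
noncomputable def subMat (K : ℕ) (w : Fin K → ℝ) : Matrix (Fin (K - 1)) (Fin (K - 1)) ℝ :=
  Matrix.of fun i j =>
    (if i = j then w (classEmb K i) else 0) -
      w (classEmb K i) * w (classEmb K j) / ∑ k, w k

/-- The full-data information matrix `S_full` with entries `δ_{ij} p_i - p_i p_j`. -/
def fullMat (K : ℕ) (p : Fin K → ℝ) : Matrix (Fin (K - 1)) (Fin (K - 1)) ℝ :=
  Matrix.of fun i j =>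
    (if i = j then p (classEmb K i) else 0) - p (classEmb K i) * p (classEmb K j)

/-!
The matrix `δ_{ij} w_i - w_i w_j / ∑ k, w k` is the (unnormalised) covariance of the class
indicators under the weights `w`. When `w` is split into two blocks, the law of total covariance
writes it as the covariances within the blocks plus a rank-one term which depends only on the two
block means and on the product of the block masses divided by their sum.

If some class `m` has probability `q > 1/2`, take the blocks `{m}` and its complement. Passing from
the full-data weights to `γ` times the subsampling weights changes the masses from `q` and `1 - q`
to `2 (1 - q) q` and `2 q (1 - q)`. Both pairs have product divided by sum equal to `q (1 - q)`, so
the rank-one term is unchanged; the within-class term of `m` vanishes, and that of the complement is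
multiplied by `2 q`. The difference is therefore `2 q - 1 ≥ 0` times a covariance. If `q = 1/2`, the
two weights agree.
-/

open Matrix

section Field

variable {ι R : Type*} [Fintype ι] [Field R]

/-- The unnormalised covariance matrix of the class indicators under the weights `w`; `subMat` and
`fullMat` are its restrictions to all classes but the last. If the weights sum to zero, the
convention `0⁻¹ = 0` makes it `diagonal w`. -/
def weightedCov [DecidableEq ι] (w : ι → R) : Matrix ι ι R :=
  diagonal w - (∑ k, w k)⁻¹ • vecMulVec w w

/-- The between-block part of the covariance under `u + v`, for blocks with weights `u` and `v`:
the means `u / ∑ u` and `v / ∑ v` enter through their difference, and the masses only through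
their product divided by their sum. It is meant for nonzero masses with nonzero sum. -/
def betweenCov (u v : ι → R) : Matrix ι ι R :=
  let d : ι → R := (∑ k, u k)⁻¹ • u - (∑ k, v k)⁻¹ • v
  ((∑ k, u k) * (∑ k, v k) / (∑ k, u k + ∑ k, v k)) • vecMulVec d d

/-- The condition `h` says that the rescaled masses have the same product divided by sum as the
original ones. -/
theorem betweenCov_smul_smul {u v : ι → R} {α β : R} (hα : α ≠ 0) (hβ : β ≠ 0)
    (h : α * ∑ k, u k + β * ∑ k, v k = α * β * (∑ k, u k + ∑ k, v k)) :
    betweenCov (α • u) (β • v) = betweenCov u v := by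
  have mean_smul {c : R} (hc : c ≠ 0) (w : ι → R) :
      (c * ∑ k, w k)⁻¹ • c • w = (∑ k, w k)⁻¹ • w := by
    rw [smul_smul, _root_.mul_inv_rev, inv_mul_cancel_right₀ hc]
  have mass_smul (r s : R) : α * r * (β * s) = α * β * (r * s) := by ring
  simp only [betweenCov, Pi.smul_apply, smul_eq_mul, ← mul_sum, mean_smul hα, mean_smul hβ]
  rw [h, mass_smul, mul_div_mul_left _ _ (mul_ne_zero hα hβ)]

variable [DecidableEq ι]

theorem isSymm_weightedCov (w : ι → R) : (weightedCov w).IsSymm := by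
  simp [Matrix.IsSymm, weightedCov, transpose_vecMulVec]

theorem weightedCov_smul (c : R) (w : ι → R) : weightedCov (c • w) = c • weightedCov w := by
  rcases eq_or_ne c 0 with rfl | hc
  · simp [weightedCov]
  · simp only [weightedCov, Pi.smul_apply, smul_eq_mul, ← mul_sum, diagonal_smul, smul_vecMulVec,
      vecMulVec_smul, smul_sub, smul_smul]
    congr 2
    field_simp

theorem weightedCov_single (m : ι) (c : R) : weightedCov (Pi.single m c) = 0 := by
  rcases eq_or_ne c 0 with rfl | hc
  · simp [weightedCov]
  · ext i j
    by_cases hi : i = m <;> by_cases hj : j = m <;> by_cases hij : i = j <;>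
      simp_all [weightedCov, vecMulVec_apply]

theorem dotProduct_weightedCov_mulVec (w x : ι → R) :
    x ⬝ᵥ weightedCov w *ᵥ x = ∑ k, w k * x k ^ 2 - (∑ k, w k * x k) ^ 2 / ∑ k, w k := by
  have diagonal_part : x ⬝ᵥ diagonal w *ᵥ x = ∑ k, w k * x k ^ 2 :=
    sum_congr rfl fun k _ => by rw [mulVec_diagonal]; ring
  have rank_one_part : x ⬝ᵥ vecMulVec w w *ᵥ x = (∑ k, w k * x k) ^ 2 := by
    rw [vecMulVec_mulVec, dotProduct_smul, dotProduct_comm x w, sq]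
    rfl
  rw [weightedCov, sub_mulVec, dotProduct_sub, smul_mulVec, dotProduct_smul, diagonal_part,
    rank_one_part, smul_eq_mul, inv_mul_eq_div]

theorem weightedCov_add {u v : ι → R} (hu : ∑ k, u k ≠ 0) (hv : ∑ k, v k ≠ 0)
    (huv : ∑ k, u k + ∑ k, v k ≠ 0) :
    weightedCov (u + v) = weightedCov u + weightedCov v + betweenCov u v := by
  ext i j
  simp only [weightedCov, betweenCov, Pi.add_apply, sum_add_distrib, Matrix.sub_apply,
    Matrix.add_apply, Matrix.smul_apply, vecMulVec_apply, Pi.sub_apply, Pi.smul_apply, smul_eq_mul,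
    diagonal_apply]
  split_ifs <;> field_simp <;> ring

theorem weightedCov_smul_add_smul_sub {u v : ι → R} {α β : R} (hα : α ≠ 0) (hβ : β ≠ 0)
    (hu : ∑ k, u k ≠ 0) (hv : ∑ k, v k ≠ 0) (huv : ∑ k, u k + ∑ k, v k ≠ 0)
    (h : α * ∑ k, u k + β * ∑ k, v k = α * β * (∑ k, u k + ∑ k, v k)) :
    weightedCov (α • u + β • v) - weightedCov (u + v) =
      (α - 1) • weightedCov u + (β - 1) • weightedCov v := by
  have sum_smul (c : R) (w : ι → R) : ∑ k, (c • w) k = c * ∑ k, w k := by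
    simp only [Pi.smul_apply, smul_eq_mul, mul_sum]
  rw [weightedCov_add hu hv huv, weightedCov_add, betweenCov_smul_smul hα hβ h,
    weightedCov_smul, weightedCov_smul]
  · module
  · rw [sum_smul]; exact mul_ne_zero hα hu
  · rw [sum_smul]; exact mul_ne_zero hβ hv
  · rw [sum_smul, sum_smul, h]; exact mul_ne_zero (mul_ne_zero hα hβ) huv

end Field

theorem posSemidef_weightedCov {ι R : Type*} [Fintype ι] [DecidableEq ι] [Field R] [LinearOrder R]
    [IsStrictOrderedRing R] [StarRing R] [TrivialStar R] {w : ι → R} (hw : ∀ k, 0 ≤ w k) :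
    (weightedCov w).PosSemidef := by
  have isHermitian : (weightedCov w).IsHermitian := by
    rw [IsHermitian, conjTranspose_eq_transpose_of_trivial, isSymm_weightedCov]
  refine .of_dotProduct_mulVec_nonneg isHermitian fun x => ?_
  have cauchy_schwarz : (∑ k, w k * x k) ^ 2 ≤ (∑ k, w k * x k ^ 2) * ∑ k, w k :=
    sum_sq_le_sum_mul_sum_of_sq_le_mul univ (fun k _ => mul_nonneg (hw k) (sq_nonneg _))
      (fun k _ => hw k) fun k _ => le_of_eq (by ring)
  rw [star_trivial, dotProduct_weightedCov_mulVec, sub_nonneg]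
  exact div_le_of_le_mul₀ (sum_nonneg fun k _ => hw k)
    (sum_nonneg fun k _ => mul_nonneg (hw k) (sq_nonneg _)) cauchy_schwarz

theorem subMat_eq_submatrix_weightedCov {K : ℕ} (w : Fin K → ℝ) :
    subMat K w = (weightedCov w).submatrix (classEmb K) (classEmb K) := by
  ext i j
  have classEmb_inj : classEmb K i = classEmb K j ↔ i = j := (Fin.castLE_injective _).eq_iff
  simp [subMat, weightedCov, diagonal_apply, vecMulVec_apply, classEmb_inj, div_eq_inv_mul]

theorem smul_subMat {K : ℕ} (c : ℝ) (w : Fin K → ℝ) : c • subMat K w = subMat K (c • w) := by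
  simp only [subMat_eq_submatrix_weightedCov, weightedCov_smul, submatrix_smul, Pi.smul_apply]

theorem fullMat_eq_subMat {K : ℕ} {p : Fin K → ℝ} (hp1 : ∑ k, p k = 1) :
    fullMat K p = subMat K p := by
  simp [fullMat, subMat, hp1]

theorem sum_mul_pos {ι R : Type*} [Semiring R] [LinearOrder R] [IsStrictOrderedRing R]
    {s : Finset ι} {a p : ι → R} (ha : ∀ k ∈ s, 0 < a k) (hp : ∀ k ∈ s, 0 ≤ p k)
    (hsum : 0 < ∑ k ∈ s, p k) : 0 < ∑ k ∈ s, a k * p k := by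
  obtain ⟨m, hm, hpm⟩ : ∃ m ∈ s, 0 < p m := exists_lt_of_sum_lt (by simpa using hsum)
  exact sum_pos' (fun k hk => mul_nonneg (ha k hk).le (hp k hk)) ⟨m, hm, mul_pos (ha m hm) hpm⟩

theorem lt_of_sum_lt_two_mul {ι R : Type*} [Semiring R] [LinearOrder R] [IsStrictOrderedRing R]
    {s : Finset ι} {p : ι → R} {k m : ι} (hp : ∀ i ∈ s, 0 ≤ p i) (hk : k ∈ s) (hm : m ∈ s)
    (hkm : k ≠ m) (hsum : ∑ i ∈ s, p i < 2 * p m) : p k < p m := by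
  have two_terms : p k + p m < p m + p m :=
    (add_le_sum hp hk hm hkm).trans_lt (two_mul (p m) ▸ hsum)
  exact lt_of_add_lt_add_right two_terms

section LUS

variable {ι : Type*} {p : ι → ℝ} {q : ℝ}

/-- The weights `γ * a k * p k` of local uncertainty sampling, in which `γ` cancels: classes of
probability `q` get the factor `2 (1 - q)`, all others the factor `2 q`. -/
noncomputable def lusWeight (q : ℝ) (p : ι → ℝ) (k : ι) : ℝ :=
  (if p k = q then 2 * (1 - q) else 2 * q) * p k

theorem lusWeight_half (p : ι → ℝ) : lusWeight (1 / 2) p = p := by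
  funext k
  rw [lusWeight]
  split_ifs <;> ring

variable {m : ι} [DecidableEq ι]

theorem lusWeight_eq_smul_update_add_smul_single (hm : p m = q) (hne : ∀ k ≠ m, p k ≠ q) :
    lusWeight q p =
      (2 * q) • Function.update p m 0 + (2 * (1 - q)) • (Pi.single m q : ι → ℝ) := by
  funext k
  rcases eq_or_ne k m with rfl | hk
  · simp [lusWeight, hm]
  · simp [lusWeight, hne k hk, hk]

variable [Fintype ι]

theorem weightedCov_lusWeight_sub (hp1 : ∑ k, p k = 1) (hq0 : q ≠ 0) (hq1 : q ≠ 1)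
    (hm : p m = q) (hne : ∀ k ≠ m, p k ≠ q) :
    weightedCov (lusWeight q p) - weightedCov p =
      (2 * q - 1) • weightedCov (Function.update p m 0) := by
  have hq1' : 1 - q ≠ 0 := sub_ne_zero.mpr hq1.symm
  have split : Function.update p m 0 + Pi.single m q = p := by
    rw [← hm]
    funext k
    rcases eq_or_ne k m with rfl | hk <;> simp [*]
  have mass_single : ∑ k, (Pi.single m q : ι → ℝ) k = q := by simp
  have mass_rest : ∑ k, Function.update p m 0 k = 1 - q := by
    rw [eq_sub_iff_add_eq, ← hp1]
    nth_rw 2 [← split]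
    simp only [Pi.add_apply, sum_add_distrib, mass_single]
  have difference := weightedCov_smul_add_smul_sub (u := Function.update p m 0)
    (v := Pi.single m q) (mul_ne_zero two_ne_zero hq0) (mul_ne_zero two_ne_zero hq1')
    (by rwa [mass_rest]) (by rwa [mass_single]) (by simp [mass_rest, mass_single])
    (by rw [mass_rest, mass_single]; ring)
  rwa [← lusWeight_eq_smul_update_add_smul_single hm hne, split, weightedCov_single, smul_zero,
    add_zero] at difference

theorem posSemidef_weightedCov_lusWeight_sub (hp0 : ∀ k, 0 ≤ p k) (hp1 : ∑ k, p k = 1)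
    (hq : q = max (1 / 2) (⨆ k, p k)) (hq1 : q < 1) :
    (weightedCov (lusWeight q p) - weightedCov p).PosSemidef := by
  have half_le : 1 / 2 ≤ q := hq ▸ le_max_left _ _
  rcases half_le.eq_or_lt with rfl | half_lt
  · rw [lusWeight_half, sub_self]
    exact .zero
  · have : Nonempty ι := by
      by_contra hι
      simp [not_nonempty_iff.mp hι] at hp1
    obtain ⟨m, hm⟩ := exists_eq_ciSup_of_finite (f := p)
    have hmq : p m = q := by
      rw [hm, hq, eq_comm, max_eq_right_iff]
      exact ((lt_max_iff.mp (hq ▸ half_lt)).resolve_left (lt_irrefl _)).le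
    have hne (k : ι) (hk : k ≠ m) : p k ≠ q := by
      rw [← hmq]
      exact (lt_of_sum_lt_two_mul (fun i _ => hp0 i) (mem_univ k) (mem_univ m) hk
        (by linarith)).ne
    rw [weightedCov_lusWeight_sub hp1 (by linarith) hq1.ne hmq hne]
    refine (posSemidef_weightedCov fun k => ?_).smul (by linarith)
    exact le_update_iff.mpr ⟨le_rfl, fun k _ => hp0 k⟩ k

end LUS

theorem lus_psd_large_gamma_general
    {K : ℕ} {p : Fin K → ℝ} (hp0 : ∀ k, 0 ≤ p k) (hp1 : ∑ k, p k = 1)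
    {q : ℝ} (hq : q = max (1 / 2) (⨆ k, p k)) (hq1 : q < 1)
    {γ : ℝ} (hγ : 0 < γ) {a : Fin K → ℝ}
    (ha : ∀ k, a k = if p k = q then 2 * (1 - q) / γ else 2 * q / γ) :
    0 < ∑ k, a k * p k ∧
    (γ • subMat K (fun k => a k * p k) - fullMat K p).PosSemidef := by
  have half_le : 1 / 2 ≤ q := hq ▸ le_max_left _ _
  have a_pos (k : Fin K) : 0 < a k := by
    rw [ha]
    split_ifs <;> exact div_pos (by linarith) hγ
  have smul_weights : γ • (fun k => a k * p k) = lusWeight q p := by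
    funext k
    simp only [Pi.smul_apply, smul_eq_mul, lusWeight, ha]
    split_ifs <;> field_simp
  refine ⟨sum_mul_pos (fun k _ => a_pos k) (fun k _ => hp0 k) (hp1 ▸ one_pos), ?_⟩
  rw [smul_subMat, smul_weights, fullMat_eq_subMat hp1, subMat_eq_submatrix_weightedCov,
    subMat_eq_submatrix_weightedCov]
  exact (posSemidef_weightedCov_lusWeight_sub hp0 hp1 hq hq1).submatrix (classEmb K)

theorem lus_psd_large_gamma
    (K : ℕ) (hK : 2 ≤ K) (p : Fin K → ℝ)
    (hp0 : ∀ k, 0 ≤ p k) (hp1 : ∑ k, p k = 1)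
    (q : ℝ) (hq : q = max (1 / 2) (⨆ k, p k)) (hq1 : q < 1)
    (γ : ℝ) (hγ : 2 * q ≤ γ) (a : Fin K → ℝ)
    (ha : ∀ k, a k = if p k = q then 2 * (1 - q) / γ else 2 * q / γ) :
    0 < ∑ k, a k * p k ∧
    (γ • subMat K (fun k => a k * p k) - fullMat K p).PosSemidef := by
  have half_le : 1 / 2 ≤ q := hq ▸ le_max_left _ _
  exact lus_psd_large_gamma_general hp0 hp1 hq hq1 (by linarith) ha
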